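/- arXiv:1009.3108 — 7 statements merged into one kernel-verified Lean document; each statement's English description precedes it below -/
import Mathlib

section
/- Let R be a commutative ring, A a commutative R-algebra, and g : A → A an R-algebra endomorphism, regarded as an R-linear endomorphism of A. Then for every s ≥ 1 and all a_1, …, a_s ∈ A, the s-fold iterated commutator ⁅…⁅⁅g, L_{a_s}⁆, L_{a_{s−1}}⁆, …, L_{a_1}⁆ in End_R(A) is equal to L_{(g(a_s) − a_s)·(g(a_{s−1}) − a_{s−1})⋯(g(a_1) − a_1)} ∘ g; that is, its value at any x ∈ A is (∏_{i=1}^s (g(a_i) − a_i)) · g(x). (This is the commutator identity of Theorem 5.0.4.) -/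
/-- Iterated commutator: `iterComm g [a₁, …, aₛ]` is the `s`-fold iterated commutator
`⁅…⁅⁅g, L_{aₛ}⁆, L_{aₛ₋₁}⁆, …, L_{a₁}⁆` in `End_R(A)`, where `L_a` is left
multiplication by `a`. -/
def iterComm {R A : Type*} [CommRing R] [CommRing A] [Algebra R A]
    (g : Module.End R A) : List A → Module.End R A
  | [] => g
  | a :: l => ⁅iterComm g l, (LinearMap.mulLeft R a : Module.End R A)⁆

/-!
If `T ∘ L_a = L_b ∘ T`, then `⁅T, L_a⁆ = L_{b - a} ∘ T`. Since `A` is commutative, the factor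
`L_{b - a}` commutes with all later `L_{a'}` and can be pulled out of every further commutator, so
each step contributes one factor. An algebra endomorphism `g` satisfies `g ∘ L_a = L_{g a} ∘ g`.
-/

section Ring

variable {S : Type*}

theorem lie_eq_sub_mul_of_semiconjBy [NonUnitalNonAssocRing S] {t a b : S}
    (h : SemiconjBy t a b) : ⁅t, a⁆ = (b - a) * t := by
  rw [Ring.lie_def, h.eq, sub_mul]

theorem mul_lie_of_commute [NonUnitalRing S] {c a : S} (h : Commute c a) (t : S) :
    ⁅c * t, a⁆ = c * ⁅t, a⁆ := by
  rw [Ring.lie_def, Ring.lie_def, mul_sub, mul_assoc, h.symm.left_comm]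

end Ring

section CommRing

variable {R A : Type*} [CommRing R] [CommRing A] [Algebra R A] {s : ℕ}

theorem iterComm_ofFn_of_semiconjBy (T : Module.End R A) (a b : Fin s → A)
    (h : ∀ i, SemiconjBy T (Algebra.lmul R A (a i)) (Algebra.lmul R A (b i))) :
    iterComm T (List.ofFn a) = Algebra.lmul R A (∏ i, (b i - a i)) * T := by
  induction s with
  | zero => rw [Fin.prod_univ_zero, map_one, one_mul, List.ofFn_zero, iterComm]
  | succ s ih =>
    let c := ∏ i : Fin s, (b i.succ - a i.succ)
    have hc : Commute (Algebra.lmul R A c) (Algebra.lmul R A (a 0)) :=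
      (Commute.all c (a 0)).map (Algebra.lmul R A)
    calc iterComm T (List.ofFn a)
        = ⁅iterComm T (List.ofFn fun i : Fin s ↦ a i.succ), Algebra.lmul R A (a 0)⁆ := by
          rw [List.ofFn_succ, iterComm]; rfl
      _ = ⁅Algebra.lmul R A c * T, Algebra.lmul R A (a 0)⁆ := by
          rw [ih _ _ fun i ↦ h i.succ]
      _ = Algebra.lmul R A c * (Algebra.lmul R A (b 0 - a 0) * T) := by
          rw [mul_lie_of_commute hc, lie_eq_sub_mul_of_semiconjBy (h 0), map_sub]
      _ = Algebra.lmul R A (∏ i, (b i - a i)) * T := by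
          rw [← mul_assoc, ← map_mul, Fin.prod_univ_succ, mul_comm c]

/-- Besides an algebra endomorphism `g`, this covers a weighted one `T = L_u ∘ g`, with
`b i = g (a i)`. -/
theorem iterComm_algHom_apply_general (T : Module.End R A) (a b : Fin s → A)
    (h : ∀ i y, T (a i * y) = b i * T y) (x : A) :
    iterComm T (List.ofFn a) x = (∏ i, (b i - a i)) * T x := by
  rw [iterComm_ofFn_of_semiconjBy T a b fun i ↦ LinearMap.ext (h i)]
  rfl

end CommRing

/-- The commutator identity of Theorem 5.0.4: for an `R`-algebra endomorphism `g` of `A`,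
the `s`-fold iterated commutator `⁅…⁅⁅g, L_{aₛ}⁆, …, L_{a₁}⁆` equals
`L_{(g(aₛ)-aₛ)⋯(g(a₁)-a₁)} ∘ g`. -/
theorem iterComm_algHom_apply
    (R A : Type*) [CommRing R] [CommRing A] [Algebra R A]
    (g : A →ₐ[R] A) (s : ℕ) (hs : 1 ≤ s) (a : Fin s → A) (x : A) :
    iterComm g.toLinearMap (List.ofFn a) x = (∏ i, (g (a i) - a i)) * g x :=
  iterComm_algHom_apply_general g.toLinearMap a (fun i ↦ g (a i)) (fun i ↦ map_mul g (a i)) x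
end

section
/- Let R be a commutative ring, I an ideal of R, A a commutative R-algebra, and g : A → A an R-algebra endomorphism that reduces to the identity modulo I, i.e. g(a) − a ∈ I·A for every a ∈ A. Then for every s ≥ 1, all a_1, …, a_s ∈ A and every x ∈ A, the value at x of the s-fold iterated commutator ⁅…⁅⁅g, L_{a_s}⁆, L_{a_{s−1}}⁆, …, L_{a_1}⁆ lies in I^s·A. (Thus the reduction of g modulo I^s is a differential operator of order ≤ s − 1 in Grothendieck's sense; this is the content of Theorem 5.0.4.) -/
section NonUnitalAlgHom

variable {R A : Type*} [CommRing R] [CommRing A] [Algebra R A]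

theorem lie_mulLeft_mul_nonUnitalAlgHom_mulLeft (g : A →ₙₐ[R] A) (c a : A) :
    ⁅(LinearMap.mulLeft R c * (g : A →ₗ[R] A) : Module.End R A), LinearMap.mulLeft R a⁆ =
      LinearMap.mulLeft R ((g a - a) * c) * (g : A →ₗ[R] A) := by
  ext y
  calc c * g (a * y) - a * (c * g y) = c * (g a * g y) - a * (c * g y) := by rw [map_mul]
    _ = (g a - a) * c * g y := by ring

theorem iterComm_nonUnitalAlgHom (g : A →ₙₐ[R] A) (l : List A) :
    iterComm (g : A →ₗ[R] A) l =
      LinearMap.mulLeft R (l.map fun a ↦ g a - a).prod * (g : A →ₗ[R] A) := by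
  induction l with
  | nil => simp [iterComm, ← Module.End.one_eq_id]
  | cons a l ih =>
    rw [iterComm, ih, lie_mulLeft_mul_nonUnitalAlgHom_mulLeft, List.map_cons, List.prod_cons]

theorem iterComm_algHom_mem_pow_smul_general {s : ℕ} (g : A →ₙₐ[R] A) (a : Fin s → A)
    (J : Fin s → Ideal A) (hg : ∀ i, g (a i) - a i ∈ J i) (x : A) :
    iterComm (g : A →ₗ[R] A) (List.ofFn a) x ∈ ∏ i, J i := by
  rw [iterComm_nonUnitalAlgHom, List.map_ofFn, List.prod_ofFn]
  exact Ideal.mul_mem_right _ _ (Ideal.prod_mem_prod fun i _ ↦ hg i)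

end NonUnitalAlgHom

/-- Theorem 5.0.4: if the `R`-algebra endomorphism `g` of `A` reduces to the identity
modulo `I` (i.e. `g a - a ∈ I·A` for all `a`), then for every `s ≥ 1` the value at any
`x ∈ A` of the `s`-fold iterated commutator `⁅…⁅⁅g, L_{aₛ}⁆, …, L_{a₁}⁆` lies in `Iˢ·A`;
thus the reduction of `g` modulo `Iˢ` is a differential operator of order `≤ s - 1`. -/
theorem iterComm_algHom_mem_pow_smul
    (R A : Type*) [CommRing R] [CommRing A] [Algebra R A] (I : Ideal R)
    (g : A →ₐ[R] A) (hg : ∀ a : A, g a - a ∈ I • (⊤ : Submodule R A))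
    (s : ℕ) (hs : 1 ≤ s) (a : Fin s → A) (x : A) :
    iterComm g.toLinearMap (List.ofFn a) x ∈ (I ^ s) • (⊤ : Submodule R A) := by
  simp only [Ideal.smul_top_eq_map, Submodule.restrictScalars_mem, Ideal.map_pow] at hg ⊢
  rw [← Fin.prod_const]
  exact iterComm_algHom_mem_pow_smul_general (g : A →ₙₐ[R] A) a _ (fun i ↦ hg (a i)) x
end

section
/- Let R be a commutative ring, A and B commutative R-algebras, and u, v : A → B two R-algebra homomorphisms. Then for every s ≥ 1 and all a_1, …, a_s ∈ A, the s-fold iterated bracket ⁅…⁅⁅v, a_s⁆_u, a_{s−1}⁆_u, …, a_1⁆_u is equal to L_{(v(a_s) − u(a_s))⋯(v(a_1) − u(a_1))} ∘ v; that is, its value at any x ∈ A is (∏_{i=1}^s (v(a_i) − u(a_i))) · v(x). (This is the commutator identity of Theorem 5.0.6 for a pair of homomorphisms.) -/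
/-- Iterated bracket relative to an algebra homomorphism `u : A → B`:
`relIterComm u D [a₁, …, aₛ]` is `⁅…⁅⁅D, aₛ⁆_u, aₛ₋₁⁆_u, …, a₁⁆_u`, where
`⁅D, a⁆_u := D ∘ L_a - L_{u a} ∘ D`. -/
def relIterComm {R A B : Type*} [CommRing R] [CommRing A] [CommRing B]
    [Algebra R A] [Algebra R B] (u : A →ₐ[R] B) (D : A →ₗ[R] B) :
    List A → (A →ₗ[R] B)
  | [] => D
  | a :: l =>
      (relIterComm u D l).comp (LinearMap.mulLeft R a)
        - (LinearMap.mulLeft R (u a)).comp (relIterComm u D l)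

/-- The bracket `⁅D, a⁆_u = D ∘ L_a - L_{u a} ∘ D` relative to an algebra homomorphism `u`:
one step of the recursion defining `relIterComm`. -/
def relComm {R A B : Type*} [CommSemiring R] [Semiring A] [Ring B] [Algebra R A] [Algebra R B]
    (u : A →ₐ[R] B) (D : A →ₗ[R] B) (a : A) : A →ₗ[R] B :=
  D ∘ₗ LinearMap.mulLeft R a - LinearMap.mulLeft R (u a) ∘ₗ D

theorem relComm_mulLeft_comp_algHom {R A B : Type*} [CommSemiring R] [Semiring A] [CommRing B]
    [Algebra R A] [Algebra R B] (u v : A →ₐ[R] B) (c : B) (a : A) :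
    relComm u (LinearMap.mulLeft R c ∘ₗ v.toLinearMap) a
      = LinearMap.mulLeft R ((v a - u a) * c) ∘ₗ v.toLinearMap := by
  ext x
  calc c * v (a * x) - u a * (c * v x)
      = c * (v a * v x) - u a * (c * v x) := by rw [map_mul]
    _ = (v a - u a) * c * v x := by ring

section CommRing

variable {R A B : Type*} [CommRing R] [CommRing A] [CommRing B] [Algebra R A] [Algebra R B]

theorem relIterComm_cons (u : A →ₐ[R] B) (D : A →ₗ[R] B) (a : A) (l : List A) :
    relIterComm u D (a :: l) = relComm u (relIterComm u D l) a :=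
  rfl

theorem relIterComm_algHom (u v : A →ₐ[R] B) (l : List A) :
    relIterComm u v.toLinearMap l
      = LinearMap.mulLeft R (l.map fun a => v a - u a).prod ∘ₗ v.toLinearMap := by
  induction l with
  | nil => rw [relIterComm, List.map_nil, List.prod_nil, LinearMap.mulLeft_one, LinearMap.id_comp]
  | cons a l ih =>
    rw [relIterComm_cons, ih, relComm_mulLeft_comp_algHom, List.map_cons, List.prod_cons]

end CommRing

/-- The commutator identity of Theorem 5.0.6 for a pair of algebra homomorphisms
`u, v : A → B`: the `s`-fold iterated bracket `⁅…⁅⁅v, aₛ⁆_u, …, a₁⁆_u` equals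
`L_{(v(aₛ)-u(aₛ))⋯(v(a₁)-u(a₁))} ∘ v`. -/
theorem relIterComm_algHom_apply
    (R A B : Type*) [CommRing R] [CommRing A] [CommRing B]
    [Algebra R A] [Algebra R B]
    (u v : A →ₐ[R] B) (s : ℕ) (hs : 1 ≤ s) (a : Fin s → A) (x : A) :
    relIterComm u v.toLinearMap (List.ofFn a) x
      = (∏ i, (v (a i) - u (a i))) * v x := by
  simp only [relIterComm_algHom, LinearMap.comp_apply, LinearMap.mulLeft_apply,
    AlgHom.toLinearMap_apply, List.map_ofFn, List.prod_ofFn, Function.comp_apply]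
end

section
/- Let R be a commutative ring, I an ideal of R, A and B commutative R-algebras, and u, v : A → B two R-algebra homomorphisms that agree modulo I, i.e. v(a) − u(a) ∈ I·B for every a ∈ A. Then for every s ≥ 1, all a_1, …, a_s ∈ A and every x ∈ A, the value at x of the s-fold iterated bracket ⁅…⁅⁅v, a_s⁆_u, a_{s−1}⁆_u, …, a_1⁆_u lies in I^s·B. (Thus, modulo I^s, v is a differential operator of order ≤ s − 1 relative to u in Grothendieck's sense; this is the content of Theorem 5.0.6.) -/
section

variable {R A B : Type*} [CommRing R] [CommRing A] [CommRing B] [Algebra R A] [Algebra R B]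

theorem relIterComm_cons_apply (u : A →ₐ[R] B) (D : A →ₗ[R] B) (a : A) (l : List A) (x : A) :
    relIterComm u D (a :: l) x = relIterComm u D l (a * x) - u a * relIterComm u D l x :=
  rfl

/-- The point is that `⁅b · v, a⁆_u = (v a - u a) b · v` for every `b : B`, as `v` is
multiplicative. -/
theorem relIterComm_algHom_apply_s4 (u v : A →ₐ[R] B) (l : List A) (x : A) :
    relIterComm u v.toLinearMap l x = (l.map fun a ↦ v a - u a).prod * v x := by
  induction l generalizing x with
  | nil => simp [relIterComm]
  | cons a l ih =>
    calc relIterComm u v.toLinearMap (a :: l) x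
        = (l.map fun a ↦ v a - u a).prod * v (a * x)
            - u a * ((l.map fun a ↦ v a - u a).prod * v x) := by
          rw [relIterComm_cons_apply, ih, ih]
      _ = ((a :: l).map fun a ↦ v a - u a).prod * v x := by
          rw [map_mul, List.map_cons, List.prod_cons]
          ring

theorem relIterComm_algHom_mem_pow_smul_general (J : Ideal B) (u v : A →ₐ[R] B) (l : List A)
    (huv : ∀ a ∈ l, v a - u a ∈ J) (x : A) :
    relIterComm u v.toLinearMap l x ∈ J ^ l.length := by
  have prod_mem : (l.map fun a ↦ v a - u a).prod ∈ J ^ l.length := by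
    -- The powers `J ^ n` form a graded monoid in which each factor has degree `1`.
    simpa using SetLike.list_prod_map_mem_graded (A := fun n : ℕ ↦ J ^ n) l (fun _ ↦ 1)
      (fun a ↦ v a - u a) (by simpa using huv)
  rw [relIterComm_algHom_apply_s4]
  exact Ideal.mul_mem_right _ _ prod_mem

end

/-- Theorem 5.0.6: if the algebra homomorphisms `u, v : A → B` agree modulo `I`
(i.e. `v a - u a ∈ I·B` for all `a`), then for every `s ≥ 1` the value at any `x ∈ A`
of the `s`-fold iterated bracket `⁅…⁅⁅v, aₛ⁆_u, …, a₁⁆_u` lies in `Iˢ·B`; thus modulo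
`Iˢ`, `v` is a differential operator of order `≤ s - 1` relative to `u`. -/
theorem relIterComm_algHom_mem_pow_smul
    (R A B : Type*) [CommRing R] [CommRing A] [CommRing B]
    [Algebra R A] [Algebra R B] (I : Ideal R)
    (u v : A →ₐ[R] B) (huv : ∀ a : A, v a - u a ∈ I • (⊤ : Submodule R B))
    (s : ℕ) (hs : 1 ≤ s) (a : Fin s → A) (x : A) :
    relIterComm u v.toLinearMap (List.ofFn a) x ∈ (I ^ s) • (⊤ : Submodule R B) := by
  simp only [Ideal.smul_top_eq_map, Ideal.map_pow, Submodule.restrictScalars_mem] at huv ⊢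
  simpa only [List.length_ofFn] using
    relIterComm_algHom_mem_pow_smul_general _ u v (List.ofFn a) (fun b _ ↦ huv b) x
end

section
/- Let p be a prime and h, β natural numbers. Set q := β / p^h (integer division) and, for 0 ≤ j < h, let a_j := (β / p^j) % p be the j-th base-p digit of β, so that β = q·p^h + Σ_{j=0}^{h−1} a_j·p^j. Then padicValNat p (β!) = q · padicValNat p ((p^h)!) + Σ_{j=0}^{h−1} a_j · padicValNat p ((p^j)!) + padicValNat p (q!). (This is the exact factorial-valuation computation underlying the estimate in the proof of Proposition 7.1.10.) -/
/-!
If weights satisfy `w (j + 1) = p * w j + c j`, then trading `n / p ^ (j + 1)` copies of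
`w (j + 1)` for copies of `w j` and `c j`, from the top place down, turns the digit expansion
`(n / p ^ h) * w h + ∑ j < h, aⱼ * w j` into `n * w 0 + ∑ j < h, (n / p ^ (j + 1)) * c j`. The
weights `p ^ j`, with `c = 0`, give the base-`p` expansion of `n`. The weights `v_p((p ^ j)!)`,
with `c = 1` and `w 0 = 0`, give `∑ j < h, n / p ^ (j + 1)`, which by `h` steps of Legendre's
recursion `v_p(n!) = v_p((n / p)!) + n / p` is the difference of `v_p(n!)` and
`v_p((n / p ^ h)!)`.
-/

theorem div_pow_nsmul_add_sum_digit_nsmul {M : Type*} [AddCommMonoid M] {b : ℕ} {w c : ℕ → M}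
    (hw : ∀ j, w (j + 1) = b • w j + c j) (n h : ℕ) :
    (n / b ^ h) • w h + ∑ j ∈ Finset.range h, (n / b ^ j % b) • w j
      = n • w 0 + ∑ j ∈ Finset.range h, (n / b ^ (j + 1)) • c j := by
  induction h with
  | zero => simp
  | succ h ih =>
    have exchange : (n / b ^ (h + 1)) • w (h + 1) + (n / b ^ h % b) • w h
        = (n / b ^ h) • w h + (n / b ^ (h + 1)) • c h := by
      calc _ = (n / b ^ h / b * b + n / b ^ h % b) • w h + (n / b ^ (h + 1)) • c h := by
            rw [hw, nsmul_add, smul_smul, add_nsmul, pow_succ, Nat.div_div_eq_div_mul,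
              add_right_comm]
        _ = _ := by rw [Nat.div_add_mod']
    rw [Finset.sum_range_succ, Finset.sum_range_succ, add_left_comm, exchange,
      ← add_assoc (n • w 0), ← ih, add_left_comm, add_assoc]

theorem div_pow_mul_pow_add_sum_digit_mul_pow (b n h : ℕ) :
    n / b ^ h * b ^ h + ∑ j ∈ Finset.range h, n / b ^ j % b * b ^ j = n := by
  have hw (j : ℕ) : b ^ (j + 1) = b • b ^ j + 0 := by rw [pow_succ', smul_eq_mul, add_zero]
  simpa using div_pow_nsmul_add_sum_digit_nsmul hw n h

section Legendre

variable (p : ℕ) [Fact p.Prime]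

theorem padicValNat_factorial_eq_div_add (n : ℕ) :
    padicValNat p n.factorial = padicValNat p (n / p).factorial + n / p := by
  rw [← padicValNat_mul_div_factorial, padicValNat_factorial_mul]

theorem padicValNat_factorial_eq_sum_div_pow_add (n h : ℕ) :
    padicValNat p n.factorial
      = ∑ j ∈ Finset.range h, n / p ^ (j + 1) + padicValNat p (n / p ^ h).factorial := by
  induction h with
  | zero => simp
  | succ h ih =>
    rw [ih, padicValNat_factorial_eq_div_add p (n / p ^ h), Nat.div_div_eq_div_mul, ← pow_succ,
      Finset.sum_range_succ, add_assoc, add_comm (n / _)]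

theorem padicValNat_factorial_pow (h : ℕ) :
    padicValNat p (p ^ h).factorial = ∑ i ∈ Finset.range h, p ^ i := by
  rw [padicValNat_def (Nat.factorial_ne_zero _), Nat.Prime.multiplicity_factorial_pow Fact.out]

theorem padicValNat_factorial_pow_succ (h : ℕ) :
    padicValNat p (p ^ (h + 1)).factorial = p * padicValNat p (p ^ h).factorial + 1 := by
  rw [padicValNat_factorial_pow, padicValNat_factorial_pow, geom_sum_succ]

theorem div_pow_mul_add_sum_digit_mul_padicValNat_factorial_pow (n h : ℕ) :
    n / p ^ h * padicValNat p (p ^ h).factorial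
        + ∑ j ∈ Finset.range h, n / p ^ j % p * padicValNat p (p ^ j).factorial
      = ∑ j ∈ Finset.range h, n / p ^ (j + 1) := by
  simpa using div_pow_nsmul_add_sum_digit_nsmul (w := fun j ↦ padicValNat p (p ^ j).factorial)
    (c := fun _ ↦ 1) (padicValNat_factorial_pow_succ p) n h

end Legendre

/-- The factorial-valuation computation underlying the estimate in the proof of
Proposition 7.1.10: writing `q := β / pʰ` and `aⱼ := (β / pʲ) % p` for `j < h`
(the base-`p` digits of `β`), one has `β = q·pʰ + ∑_{j<h} aⱼ·pʲ` and
`v_p(β!) = q·v_p((pʰ)!) + ∑_{j<h} aⱼ·v_p((pʲ)!) + v_p(q!)`. -/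
theorem padicValNat_factorial_digit_decomposition
    (p : ℕ) (hp : p.Prime) (h β : ℕ) :
    β = (β / p ^ h) * p ^ h + ∑ j ∈ Finset.range h, ((β / p ^ j) % p) * p ^ j ∧
    padicValNat p (Nat.factorial β)
      = (β / p ^ h) * padicValNat p (Nat.factorial (p ^ h))
        + ∑ j ∈ Finset.range h, ((β / p ^ j) % p) * padicValNat p (Nat.factorial (p ^ j))
        + padicValNat p (Nat.factorial (β / p ^ h)) := by
  have : Fact p.Prime := ⟨hp⟩
  constructor
  · exact (div_pow_mul_pow_add_sum_digit_mul_pow p β h).symm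
  · rw [div_pow_mul_add_sum_digit_mul_padicValNat_factorial_pow]
    exact padicValNat_factorial_eq_sum_div_pow_add p β h
end

section
/- Let R be a commutative ring, I an ideal of R, and A a commutative R-algebra which, as an R-module, is I-adically complete and Hausdorff (IsAdicComplete I A). Then every R-algebra endomorphism g : A → A satisfying g(a) − a ∈ I·A for all a ∈ A is bijective, hence an R-algebra automorphism of A. In particular, the set of R-algebra endomorphisms of A reducing to the identity modulo I forms a group under composition. (This is the I-adically complete analogue of Proposition 4.1.4, asserting that the sheaf G of automorphisms reducing to the identity modulo I is a sheaf of groups; the paper notes that all such statements transpose to the complete, formal setting with simpler proofs.) -/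
/-!
For an `R`-linear endomorphism `g` of `M`, if `g - id` carries `M` into `I • M`, then it carries
`I ^ n • M` into `I ^ (n + 1) • M`. It acts as `-id` on the kernel of `g`, so that kernel lies in
every `I ^ n • M` and is zero by Hausdorffness. Surjectivity of `g` lifts from `M / I • M`, where
`g` induces the identity, by completeness.
-/

lemma map_smul_top_le_mul_smul_top {R M N : Type*} [CommSemiring R] [AddCommMonoid M] [Module R M]
    [AddCommMonoid N] [Module R N] (I : Ideal R) {J : Ideal R} {f : M →ₗ[R] N}
    (hf : LinearMap.range f ≤ J • ⊤) :
    (I • (⊤ : Submodule R M)).map f ≤ (I * J) • (⊤ : Submodule R N) := by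
  rw [Submodule.map_smul'', Submodule.map_top, Submodule.mul_smul]
  exact smul_mono_right I hf

section

variable {R M : Type*} [CommRing R] [AddCommGroup M] [Module R M] {I : Ideal R} {g : M →ₗ[R] M}

lemma ker_le_pow_smul_top_of_sub_id_mem_smul
    (hg : ∀ x, g x - x ∈ I • (⊤ : Submodule R M)) (n : ℕ) :
    LinearMap.ker g ≤ I ^ n • (⊤ : Submodule R M) := by
  have hrange : LinearMap.range (g - LinearMap.id) ≤ I • ⊤ := by
    rintro _ ⟨x, rfl⟩
    exact hg x
  induction n with
  | zero => simp
  | succ n ih =>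
    intro x hx
    have hmap : (g - LinearMap.id : M →ₗ[R] M) x ∈ I ^ (n + 1) • (⊤ : Submodule R M) := by
      rw [pow_succ]
      exact map_smul_top_le_mul_smul_top (I ^ n) hrange (Submodule.mem_map_of_mem (ih hx))
    simpa [LinearMap.mem_ker.mp hx] using hmap

lemma injective_of_sub_id_mem_smul_of_isHausdorff [IsHausdorff I M]
    (hg : ∀ x, g x - x ∈ I • (⊤ : Submodule R M)) : Function.Injective g := by
  rw [← LinearMap.ker_eq_bot, eq_bot_iff, ← IsHausdorff.iInf_pow_smul (I := I) inferInstance]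
  exact le_iInf (ker_le_pow_smul_top_of_sub_id_mem_smul hg)

lemma surjective_of_sub_id_mem_smul_of_isAdicComplete [IsAdicComplete I M]
    (hg : ∀ x, g x - x ∈ I • (⊤ : Submodule R M)) : Function.Surjective g := by
  have hmkQ : (I • (⊤ : Submodule R M)).mkQ ∘ₗ g = (I • (⊤ : Submodule R M)).mkQ :=
    LinearMap.ext fun x ↦ (Submodule.Quotient.eq _).mpr (hg x)
  apply surjective_of_mkQ_comp_surjective (I := I)
  rw [hmkQ]
  exact Submodule.mkQ_surjective _

theorem bijective_of_sub_id_mem_smul_of_isAdicComplete_general [IsAdicComplete I M]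
    (hg : ∀ x, g x - x ∈ I • (⊤ : Submodule R M)) : Function.Bijective g :=
  ⟨injective_of_sub_id_mem_smul_of_isHausdorff hg,
    surjective_of_sub_id_mem_smul_of_isAdicComplete hg⟩

end

/-- The `I`-adically complete analogue of Proposition 4.1.4: if `A` is an `I`-adically
complete and Hausdorff `R`-algebra, then every `R`-algebra endomorphism of `A` reducing
to the identity modulo `I` is bijective, hence an automorphism; in particular such
endomorphisms form a group. -/
theorem bijective_of_sub_id_mem_smul_of_isAdicComplete
    (R A : Type*) [CommRing R] [CommRing A] [Algebra R A]
    (I : Ideal R) [IsAdicComplete I A]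
    (g : A →ₐ[R] A) (hg : ∀ a : A, g a - a ∈ I • (⊤ : Submodule R A)) :
    Function.Bijective g :=
  bijective_of_sub_id_mem_smul_of_isAdicComplete_general (g := g.toLinearMap) hg
end

section
/- Let R be a commutative ring, π ∈ R, and let A, B be commutative R-algebras. Assume that A, as an R-module, is (π)-adically complete and Hausdorff (IsAdicComplete (π) A), that B is (π)-adically Hausdorff (⋂_n π^n·B = 0), and that π is a non-zero-divisor on B (π·b = 0 implies b = 0). If u : A → B is an R-algebra homomorphism whose reduction modulo π, A/πA → B/πB, is bijective, then u is bijective. (This is the adically complete analogue of Theorem 2.2.10: a morphism of flat adic lifts which is an isomorphism modulo the ideal is an isomorphism.) -/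
/-!
Surjectivity is successive approximation. For injectivity, the kernel `K` of `u` lies in `πA`
because `u` is injective modulo `π`; as `π` is a non-zero-divisor on `B`, the relation
`0 = u (π a) = π u a` forces `u a = 0`, so that `K = πK`. Iterating, `K ⊆ ⋂ₙ πⁿA = 0`.

The same argument works for a linear map `f : M → N` and any ideal `I` such that
`ker f ∩ IM = I ker f`. For surjective `f` this is the vanishing of the connecting map
`Tor₁(N, R/I) → ker f / I ker f`, which holds in particular when `N` is flat
(`LinearMap.ker_inf_smul_top_eq_smul_of_flat`).
-/

/-- The reduction of `u : A →ₐ[R] B` modulo `π`, as a ring homomorphism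
`A ⧸ πA →+* B ⧸ πB`. -/
def redMod {R A B : Type*} [CommRing R] [CommRing A] [CommRing B]
    [Algebra R A] [Algebra R B] (π : R) (u : A →ₐ[R] B) :
    A ⧸ Ideal.span {algebraMap R A π} →+* B ⧸ Ideal.span {algebraMap R B π} :=
  Ideal.quotientMap (Ideal.span {algebraMap R B π}) (u : A →+* B)
    (by
      rw [Ideal.span_le, Set.singleton_subset_iff]
      simp [Ideal.mem_comap, u.commutes, Ideal.mem_span_singleton])

section Module

variable {R M N : Type*} [CommRing R] [AddCommGroup M] [Module R M] [AddCommGroup N] [Module R N]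
  {I : Ideal R}

theorem eq_bot_of_le_smul_of_isHausdorff [IsHausdorff I M] {K : Submodule R M} (hK : K ≤ I • K) :
    K = ⊥ := by
  have le_pow_smul (n : ℕ) : K ≤ I ^ n • K := by
    induction n with
    | zero => simp
    | succ n ih =>
      calc
        K ≤ I ^ n • K := ih
        _ ≤ I ^ n • I • K := smul_mono_right _ hK
        _ = I ^ (n + 1) • K := by rw [← Submodule.mul_smul, pow_succ]
  rw [eq_bot_iff, ← IsHausdorff.iInf_pow_smul (I := I) (M := M) inferInstance]
  exact le_iInf fun n => (le_pow_smul n).trans (smul_mono_right _ le_top)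

variable {f : M →ₗ[R] N}

theorem ker_le_smul_top_of_injective_reduceModIdeal
    (hf : Function.Injective (f.reduceModIdeal I)) : f.ker ≤ I • ⊤ := by
  intro x hx
  rw [← Submodule.Quotient.mk_eq_zero]
  apply hf
  rw [LinearMap.reduceModIdeal_apply, LinearMap.mem_ker.mp hx, Submodule.Quotient.mk_zero, map_zero]

theorem injective_of_injective_reduceModIdeal [IsHausdorff I M]
    (hker : f.ker ⊓ I • ⊤ ≤ I • f.ker) (hf : Function.Injective (f.reduceModIdeal I)) :
    Function.Injective f :=
  LinearMap.ker_eq_bot.mp <| eq_bot_of_le_smul_of_isHausdorff <|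
    (le_inf le_rfl (ker_le_smul_top_of_injective_reduceModIdeal hf)).trans hker

theorem surjective_of_surjective_reduceModIdeal [IsPrecomplete I M] [IsHausdorff I N]
    (hf : Function.Surjective (f.reduceModIdeal I)) : Function.Surjective f :=
  surjective_of_mkQ_comp_surjective (I := I) (hf.comp (Submodule.mkQ_surjective _))

theorem bijective_of_bijective_redMod_general [IsAdicComplete I M] [IsHausdorff I N]
    (hker : f.ker ⊓ I • ⊤ ≤ I • f.ker) (hf : Function.Bijective (f.reduceModIdeal I)) :
    Function.Bijective f :=
  ⟨injective_of_injective_reduceModIdeal hker hf.injective,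
    surjective_of_surjective_reduceModIdeal hf.surjective⟩

theorem ker_inf_span_singleton_smul_top_le {r : R} (hr : IsSMulRegular N r) :
    f.ker ⊓ Ideal.span {r} • ⊤ ≤ Ideal.span {r} • f.ker := by
  rintro x ⟨hx, hxr⟩
  rw [Submodule.ideal_span_singleton_smul] at hxr ⊢
  obtain ⟨y, -, rfl⟩ := hxr
  have hy : r • f y = 0 := by simpa using hx
  exact Submodule.smul_mem_pointwise_smul y r _ (hr.right_eq_zero_of_smul hy)

end Module

section Algebra

variable {R A B : Type*} [CommRing R] [CommRing A] [CommRing B] [Algebra R A] [Algebra R B]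

theorem span_singleton_smul_top_eq_restrictScalars (r : R) :
    (Ideal.span {r} • ⊤ : Submodule R A) =
      (Ideal.span {algebraMap R A r}).restrictScalars R := by
  rw [Ideal.smul_top_eq_map, Ideal.map_span, Set.image_singleton]

/-- The identification of the two encodings of `A/rA`: the quotient of the `R`-module `A` by
`(r) • ⊤`, which appears in `LinearMap.reduceModIdeal`, and the quotient ring of `A` by the ideal
generated by the image of `r`, which appears in `redMod`. -/
noncomputable def quotSpanSingletonSMulTopEquiv (r : R) :
    (A ⧸ (Ideal.span {r} • ⊤ : Submodule R A)) ≃ₗ[R] A ⧸ Ideal.span {algebraMap R A r} :=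
  Submodule.quotEquivOfEq _ _ (span_singleton_smul_top_eq_restrictScalars r) ≪≫ₗ
    Submodule.Quotient.restrictScalarsEquiv R (Ideal.span {algebraMap R A r})

theorem redMod_quotSpanSingletonSMulTopEquiv (r : R) (u : A →ₐ[R] B)
    (x : A ⧸ (Ideal.span {r} • ⊤ : Submodule R A)) :
    redMod r u (quotSpanSingletonSMulTopEquiv r x) =
      quotSpanSingletonSMulTopEquiv r (u.toLinearMap.reduceModIdeal (Ideal.span {r}) x) := by
  obtain ⟨a, rfl⟩ := Submodule.Quotient.mk_surjective _ x
  rfl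

theorem bijective_reduceModIdeal_iff_bijective_redMod {r : R} {u : A →ₐ[R] B} :
    Function.Bijective (u.toLinearMap.reduceModIdeal (Ideal.span {r})) ↔
      Function.Bijective (redMod r u) := by
  rw [← Function.Bijective.of_comp_iff (redMod r u) (quotSpanSingletonSMulTopEquiv r).bijective,
    ← Function.Bijective.of_comp_iff' (quotSpanSingletonSMulTopEquiv (A := B) r).bijective]
  exact iff_of_eq (congrArg _ (funext fun x => (redMod_quotSpanSingletonSMulTopEquiv r u x).symm))

end Algebra

/-- The adically complete analogue of Theorem 2.2.10: if `A` is `(π)`-adically complete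
and Hausdorff, `B` is `(π)`-adically Hausdorff, `π` is a non-zero-divisor on `B`, and the
reduction of `u : A → B` modulo `π` is bijective, then `u` is bijective. -/
theorem bijective_of_bijective_redMod
    (R A B : Type*) [CommRing R] [CommRing A] [CommRing B]
    [Algebra R A] [Algebra R B] (π : R)
    [IsAdicComplete (Ideal.span {π}) A] [IsHausdorff (Ideal.span {π}) B]
    (hreg : ∀ b : B, π • b = 0 → b = 0)
    (u : A →ₐ[R] B)
    (hbij : Function.Bijective (redMod π u)) :
    Function.Bijective u :=
  bijective_of_bijective_redMod_general (f := u.toLinearMap)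
    (ker_inf_span_singleton_smul_top_le (.of_right_eq_zero_of_smul hreg))
    (bijective_reduceModIdeal_iff_bijective_redMod.mpr hbij)
end
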